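/- Let μ ≤_cd ν be finite Borel measures on ℝ with finite first moments. Then for every x ∈ ℝ one has μ|_{[x,∞)} ≤_pcd ν, and there exists a unique finite Borel measure P on ℝ² whose first marginal is μ and which satisfies P([x,∞) × A) = S^ν(μ|_{[x,∞)})(A) for every x ∈ ℝ and every Borel set A ⊆ ℝ. Moreover this measure P is a supermartingale coupling, P ∈ S(μ,ν). (This P is called the Decreasing Supermartingale Transport.) -/

import Mathlib

/-!
Write `p_m t = ∫ (t - s)⁺ dm(s)` for the put function of `m`. Measures with finite first moment
correspond to their put functions (nonnegative convex functions vanishing at `-∞` with bounded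
slope, `exists_measure_lput_eq`, `eq_of_lput_eq`), and `≤_cd` means equal mass together with
`p_α ≤ p_β` (`cdOrder_of_put_le`).

*Shadows.* If `p_η ≤ p_ν`, let `c = conv (p_ν - p_η)` be the largest convex minorant. Then
`p_ν - c` is convex too (`IsHull.convexOn_sub`): were it above one of its chords, `c` could be
raised under the chord to a larger convex minorant. Hence `ν = θ + ρ` with `p_ρ = c`, and maximality
of the hull says exactly that `θ` is the shadow of `η` in `ν` (`IsShadowSplit.isShadow`). Since
`conv (f - g) = conv (conv f - g)` for convex `g`, the shadow of `η₁ + η₂` is the shadow of `η₁`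
plus a measure `κ` with `η₂ ≤_cd κ` (`IsShadowSplit.exists_increment`).

*The transport.* For `η = μ|[x, ∞)` this yields shadows `θ x` decreasing in `x`, of mass
`μ [x, ∞)`. Their densities with respect to `ν` are distribution functions in `-x`, and the
corresponding kernel produces `P` with `P ([x, ∞) × A) = θ x A` and second marginal `ν`
(`exists_measure_prod_Ici`). Rectangles `[x, ∞) × A` determine `P`, which gives uniqueness.

*Supermartingale property.* `P` transports `μ|[x, y)` to the increment `θ x - θ y`, which dominates
`μ|[x, y)` in `≤_cd`; testing with `s ↦ -s` gives the barycentre inequality on `[x, y)`. It extends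
to all Borel sets because two finite measures ordered on intervals are ordered
(`setIntegral_nonneg_of_Ico`).
-/

open MeasureTheory Set
open scoped ENNReal

noncomputable section

/-- A finite Borel measure on ℝ with finite first moment. -/
def FiniteFirstMoment (μ : Measure ℝ) : Prop :=
  IsFiniteMeasure μ ∧ Integrable (fun x : ℝ => x) μ

/-- Linear growth of a real function. -/
def LinearGrowth (φ : ℝ → ℝ) : Prop :=
  ∃ C : ℝ, ∀ x : ℝ, |φ x| ≤ C * (1 + |x|)

/-- Convex-decreasing (second stochastic) order `μ ≤_cd ν`. -/
def CDOrder (μ ν : Measure ℝ) : Prop :=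
  ∀ φ : ℝ → ℝ, ConvexOn ℝ Set.univ φ → Antitone φ → LinearGrowth φ →
    ∫ x, φ x ∂μ ≤ ∫ x, φ x ∂ν

/-- Positive-convex-decreasing order `μ ≤_pcd ν`. -/
def PCDOrder (μ ν : Measure ℝ) : Prop :=
  ∀ φ : ℝ → ℝ, ConvexOn ℝ Set.univ φ → Antitone φ → (∀ x : ℝ, 0 ≤ φ x) →
    LinearGrowth φ → ∫ x, φ x ∂μ ≤ ∫ x, φ x ∂ν

/-- Convex order `μ ≤_c ν`. -/
def COrder (μ ν : Measure ℝ) : Prop :=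
  ∀ φ : ℝ → ℝ, ConvexOn ℝ Set.univ φ → LinearGrowth φ →
    ∫ x, φ x ∂μ ≤ ∫ x, φ x ∂ν

/-- `P` is a coupling of `μ` and `ν`. -/
def IsCoupling (P : Measure (ℝ × ℝ)) (μ ν : Measure ℝ) : Prop :=
  P.map Prod.fst = μ ∧ P.map Prod.snd = ν

/-- The supermartingale property of a measure on `ℝ × ℝ`. -/
def SupermartingaleProperty (P : Measure (ℝ × ℝ)) : Prop :=
  ∀ A : Set ℝ, MeasurableSet A →
    ∫ p in A ×ˢ (Set.univ : Set ℝ), p.2 ∂P ≤ ∫ p in A ×ˢ (Set.univ : Set ℝ), p.1 ∂P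

/-- `P ∈ S(μ,ν)`: supermartingale coupling. -/
def IsSupermartingaleCoupling (P : Measure (ℝ × ℝ)) (μ ν : Measure ℝ) : Prop :=
  IsCoupling P μ ν ∧ SupermartingaleProperty P

/-- `P|_{M×ℝ}` is a martingale. -/
def MartingaleOn (P : Measure (ℝ × ℝ)) (M : Set ℝ) : Prop :=
  ∀ A : Set ℝ, MeasurableSet A → A ⊆ M →
    ∫ p in A ×ˢ (Set.univ : Set ℝ), p.2 ∂P = ∫ p in A ×ˢ (Set.univ : Set ℝ), p.1 ∂P

/-- `P ∈ M(μ,ν)`: martingale coupling. -/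
def IsMartingaleCoupling (P : Measure (ℝ × ℝ)) (μ ν : Measure ℝ) : Prop :=
  IsCoupling P μ ν ∧ MartingaleOn P Set.univ

/-- `θ` is the shadow `S^ν(μ)` of `μ` in `ν`. -/
def IsShadow (μ ν θ : Measure ℝ) : Prop :=
  FiniteFirstMoment θ ∧ CDOrder μ θ ∧ θ ≤ ν ∧
  ∀ θ' : Measure ℝ, FiniteFirstMoment θ' → CDOrder μ θ' → θ' ≤ ν → CDOrder θ θ'

/-- `P` is the Increasing Supermartingale Transport from `μ` to `ν`. -/
def IsIncreasingSMT (μ ν : Measure ℝ) (P : Measure (ℝ × ℝ)) : Prop :=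
  IsSupermartingaleCoupling P μ ν ∧
  ∀ x : ℝ, ∃ θ : Measure ℝ, IsShadow (μ.restrict (Set.Iic x)) ν θ ∧
    ∀ A : Set ℝ, MeasurableSet A → P (Set.Iic x ×ˢ A) = θ A

/-- `P` is the Decreasing Supermartingale Transport from `μ` to `ν`. -/
def IsDecreasingSMT (μ ν : Measure ℝ) (P : Measure (ℝ × ℝ)) : Prop :=
  IsSupermartingaleCoupling P μ ν ∧
  ∀ x : ℝ, ∃ θ : Measure ℝ, IsShadow (μ.restrict (Set.Ici x)) ν θ ∧
    ∀ A : Set ℝ, MeasurableSet A → P (Set.Ici x ×ˢ A) = θ A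

/-- Relaxed supermartingale Spence–Mirrlees property. -/
def RelaxedSupermartingaleSM (f : ℝ × ℝ → ℝ) : Prop :=
  ∀ x₁ x₂ : ℝ, x₁ < x₂ →
    Antitone (fun y : ℝ => f (x₂, y) - f (x₁, y)) ∧
    ConvexOn ℝ Set.univ (fun y : ℝ => f (x₂, y) - f (x₁, y))

/-- (Strict) supermartingale Spence–Mirrlees property. -/
def SupermartingaleSM (f : ℝ × ℝ → ℝ) : Prop :=
  ∀ x₁ x₂ : ℝ, x₁ < x₂ →
    StrictAnti (fun y : ℝ => f (x₂, y) - f (x₁, y)) ∧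
    StrictConvexOn ℝ Set.univ (fun y : ℝ => f (x₂, y) - f (x₁, y))

/-- `f⁺` is `S(μ,ν)`-uniformly integrable. -/
def PosPartUnifInt (μ ν : Measure ℝ) (f : ℝ × ℝ → ℝ) : Prop :=
  ∀ ε : ℝ, 0 < ε → ∃ N : ℝ, ∀ P : Measure (ℝ × ℝ),
    IsSupermartingaleCoupling P μ ν →
      ∫ p in {p : ℝ × ℝ | N < max (f p) 0}, max (f p) 0 ∂P ≤ ε

/-- First-order left monotonicity of `(Γ, M)`. -/
def FirstOrderLeftMonotone (Γ : Set (ℝ × ℝ)) (M : Set ℝ) : Prop :=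
  ∀ x₁ y₁ x₂ y₂ : ℝ, (x₁, y₁) ∈ Γ → (x₂, y₂) ∈ Γ → x₁ < x₂ → x₂ ∉ M → y₁ ≤ y₂

/-- First-order right monotonicity of `(Γ, M)`. -/
def FirstOrderRightMonotone (Γ : Set (ℝ × ℝ)) (M : Set ℝ) : Prop :=
  ∀ x₁ y₁ x₂ y₂ : ℝ, (x₁, y₁) ∈ Γ → (x₂, y₂) ∈ Γ → x₁ < x₂ → x₁ ∉ M → y₂ ≤ y₁

/-- Second-order left monotonicity of `Γ`. -/
def SecondOrderLeftMonotone (Γ : Set (ℝ × ℝ)) : Prop :=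
  ∀ x y₁ y₂ x' y' : ℝ, (x, y₁) ∈ Γ → (x, y₂) ∈ Γ → (x', y') ∈ Γ →
    y₁ < y₂ → x < x' → y' ∉ Set.Ioo y₁ y₂

/-- Second-order right monotonicity of `Γ`. -/
def SecondOrderRightMonotone (Γ : Set (ℝ × ℝ)) : Prop :=
  ∀ x y₁ y₂ x' y' : ℝ, (x, y₁) ∈ Γ → (x, y₂) ∈ Γ → (x', y') ∈ Γ →
    y₁ < y₂ → x' < x → y' ∉ Set.Ioo y₁ y₂

/-- Nondegeneracy of `(Γ, M)`. -/
def Nondegenerate (Γ : Set (ℝ × ℝ)) (M : Set ℝ) : Prop :=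
  (∀ x y : ℝ, (x, y) ∈ Γ → x < y → ∃ y' : ℝ, y' < x ∧ (x, y') ∈ Γ) ∧
  (∀ x y : ℝ, x ∈ M → (x, y) ∈ Γ → y < x → ∃ y' : ℝ, x < y' ∧ (x, y') ∈ Γ)

/-- The put function `p_μ`. -/
def put (μ : Measure ℝ) (t : ℝ) : ℝ := ∫ s, max (t - s) 0 ∂μ

/-- `x` is a barrier for the supermartingale transports from `μ` to `ν`. -/
def IsBarrier (μ ν : Measure ℝ) (x : ℝ) : Prop :=
  ∀ P : Measure (ℝ × ℝ), IsSupermartingaleCoupling P μ ν →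
    P {p : ℝ × ℝ | p.1 ≤ x ∧ x < p.2} = 0 ∧ P {p : ℝ × ℝ | x ≤ p.1 ∧ p.2 < x} = 0

/-- Barycenter of a finite measure (with `bary 0 = 0`). -/
def bary (θ : Measure ℝ) : ℝ := (∫ t, t ∂θ) / (θ Set.univ).toReal

open Filter Topology

/-! ### Convex hulls of functions on the line -/

/-- `c` is the convex hull of `f`: the largest convex function below `f`. -/
def IsHull (f c : ℝ → ℝ) : Prop :=
  ConvexOn ℝ univ c ∧ (∀ t, c t ≤ f t) ∧
    ∀ g : ℝ → ℝ, ConvexOn ℝ univ g → (∀ t, g t ≤ f t) → ∀ t, g t ≤ c t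

lemma exists_isHull (f g : ℝ → ℝ) (hg : ConvexOn ℝ univ g) (hgf : ∀ t, g t ≤ f t) :
    ∃ c, IsHull f c := by
  let S := {h : ℝ → ℝ // ConvexOn ℝ univ h ∧ ∀ t, h t ≤ f t}
  have : Nonempty S := ⟨⟨g, hg, hgf⟩⟩
  have hb : ∀ t, BddAbove (range fun h : S => h.1 t) := by
    intro t
    refine ⟨f t, ?_⟩
    rintro _ ⟨h, rfl⟩
    exact h.2.2 t
  refine ⟨fun t => ⨆ h : S, h.1 t, ⟨convex_univ, ?_⟩, ?_, ?_⟩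
  · intro x _ y _ a b ha hb' hab
    refine ciSup_le fun h => (h.2.1.2 (mem_univ x) (mem_univ y) ha hb' hab).trans ?_
    simp only [smul_eq_mul]
    exact add_le_add (mul_le_mul_of_nonneg_left (le_ciSup (hb x) h) ha)
      (mul_le_mul_of_nonneg_left (le_ciSup (hb y) h) hb')
  · exact fun t => ciSup_le fun h => h.2.2 t
  · exact fun h hc hf t => le_ciSup (hb t) (⟨h, hc, hf⟩ : S)

/-- Hulls can be taken in two steps: `conv (f - g) = conv (conv f - g)` for convex `g`. It is the
analytic form of the additivity of shadows. -/
lemma IsHull.of_sub {f g c d : ℝ → ℝ} (hc : IsHull f c) (hg : ConvexOn ℝ univ g)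
    (hd : IsHull (fun t => f t - g t) d) : IsHull (fun t => c t - g t) d := by
  refine ⟨hd.1, fun t => ?_, fun h hh hle t => hd.2.2 h hh (fun s => ?_) t⟩
  · have := hc.2.2 (d + g) (hd.1.add hg) (fun s => ?_) t
    · simp only [Pi.add_apply] at this
      linarith
    · have := hd.2.1 s
      simp only [Pi.add_apply]
      linarith
  · have h1 := hle s
    have h2 := hc.2.1 s
    linarith

/-- A convex function lying below an affine function at two points lies below it in between. -/
lemma ConvexOn.le_affine {e : ℝ → ℝ} (he : ConvexOn ℝ univ e) {x y m k b : ℝ}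
    (hxm : x ≤ m) (hmy : m ≤ y) (hx : e x ≤ k * x + b) (hy : e y ≤ k * y + b) :
    e m ≤ k * m + b := by
  have hl : ConvexOn ℝ univ (fun t : ℝ => e t - (k * t + b)) := by
    refine he.sub ⟨convex_univ, ?_⟩
    intro x _ y _ s t _ _ hst
    simp only [smul_eq_mul]
    have : b = (s + t) * b := by rw [hst, one_mul]
    linarith
  have := hl.le_max_of_mem_Icc (mem_univ x) (mem_univ y) ⟨hxm, hmy⟩
  have h0 : max (e x - (k * x + b)) (e y - (k * y + b)) ≤ 0 := max_le (by linarith) (by linarith)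
  linarith

/-- Converse of `ConvexOn.le_affine`, as a criterion for convexity. -/
lemma convexOn_of_le_affine {w : ℝ → ℝ}
    (H : ∀ x y m k b : ℝ, x < m → m < y → w x = k * x + b → w y = k * y + b →
      w m ≤ k * m + b) : ConvexOn ℝ univ w := by
  refine LinearOrder.convexOn_of_lt convex_univ ?_
  intro x _ y _ hxy s t hs ht hst
  have hne : y - x ≠ 0 := by linarith
  have ht1 : t = 1 - s := by linarith
  subst ht1
  have := H x y (s • x + (1 - s) • y) ((w y - w x) / (y - x))
    (w x - (w y - w x) / (y - x) * x)
    (by simp only [smul_eq_mul]; nlinarith) (by simp only [smul_eq_mul]; nlinarith)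
    (by ring) (by field_simp; ring)
  refine this.trans (le_of_eq ?_)
  simp only [smul_eq_mul]
  field_simp
  ring

/-- Raising a convex `c` on `[u, v]` to a convex `e` that agrees with `c` at `u` and `v` keeps
it convex. -/
lemma convexOn_glue {c e : ℝ → ℝ} (hc : ConvexOn ℝ univ c) (he : ConvexOn ℝ univ e) {u v : ℝ}
    (hu : e u = c u) (hv : e v = c v) :
    ConvexOn ℝ univ (fun t => if u ≤ t ∧ t ≤ v then max (c t) (e t) else c t) := by
  set w : ℝ → ℝ := fun t => if u ≤ t ∧ t ≤ v then max (c t) (e t) else c t with hw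
  have hcw : ∀ t, c t ≤ w t := by
    intro t
    simp only [hw]
    split_ifs
    · exact le_max_left _ _
    · exact le_rfl
  have hew : ∀ t, u ≤ t → t ≤ v → e t ≤ w t := by
    intro t h1 h2
    simp only [hw, h1, h2, and_self, if_true]
    exact le_max_right _ _
  refine convexOn_of_le_affine fun x y m k b hxm hmy hx hy => ?_
  have hcl : ∀ t, x ≤ t → t ≤ y → c t ≤ k * t + b := fun t h1 h2 =>
    hc.le_affine h1 h2 ((hcw x).trans hx.le) ((hcw y).trans hy.le)
  simp only [hw]
  split_ifs with hm
  · refine max_le (hcl m hxm.le hmy.le) ?_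
    refine he.le_affine (x := max x u) (y := min y v) (max_le hxm.le hm.1)
      (le_min hmy.le hm.2) ?_ ?_
    · rcases le_total x u with h | h
      · rw [max_eq_right h, hu]
        exact hcl u h (hm.1.trans hmy.le)
      · rw [max_eq_left h]
        exact (hew x h (hxm.le.trans hm.2)).trans hx.le
    · rcases le_total y v with h | h
      · rw [min_eq_left h]
        exact (hew y (hm.1.trans hmy.le) h).trans hy.le
      · rw [min_eq_right h, hv]
        exact hcl v (hxm.le.trans hm.2) h
  · exact hcl m hxm.le hmy.le

/-- The convexity of `P - conv (P - Q)`. If `G = P - c` exceeded one of its chords `L` over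
`[u, v]`, raising `c` to `P - L` on `[u, v]` would give a larger convex minorant of `P - Q`. -/
lemma IsHull.convexOn_sub {P Q c : ℝ → ℝ} (hP : ConvexOn ℝ univ P) (hQ : ConvexOn ℝ univ Q)
    (hc : IsHull (fun t => P t - Q t) c) : ConvexOn ℝ univ (fun t => P t - c t) := by
  refine convexOn_of_le_affine fun u v m k b hum hmv hu hv => ?_
  have he : ConvexOn ℝ univ (fun t : ℝ => P t - (k * t + b)) := by
    refine hP.sub ⟨convex_univ, ?_⟩
    intro x _ y _ s t _ _ hst
    simp only [smul_eq_mul]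
    have : b = (s + t) * b := by rw [hst, one_mul]
    linarith
  have hg := convexOn_glue hc.1 he (u := u) (v := v) (by linarith) (by linarith)
  have hle := hc.2.2 _ hg (fun t => ?_) m
  · simp only [hum.le, hmv.le, and_self, if_true] at hle
    have := (le_max_right _ _).trans hle
    linarith
  · simp only
    split_ifs with ht
    · refine max_le (hc.2.1 t) ?_
      have := hQ.le_affine (k := k) (b := b) ht.1 ht.2
        (by have := hc.2.1 u; linarith) (by have := hc.2.1 v; linarith)
      linarith
    · exact hc.2.1 t

/-! ### Measures and their put functions -/

/-- The put function `t ↦ ∫ (t - s)⁺ dm(s)` with values in `[0, ∞]`; `ENNReal.ofReal` takes the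
positive part. -/
noncomputable def lput (m : Measure ℝ) (t : ℝ) : ℝ≥0∞ := ∫⁻ s, ENNReal.ofReal (t - s) ∂m

lemma lput_add (m₁ m₂ : Measure ℝ) (t : ℝ) : lput (m₁ + m₂) t = lput m₁ t + lput m₂ t := by
  simp [lput, lintegral_add_measure]

/-- Layer-cake formula: a put function is the primitive of the distribution function. -/
lemma lput_eq_lintegral_Iic (m : Measure ℝ) [IsFiniteMeasure m] (t : ℝ) :
    lput m t = ∫⁻ u in Iio t, m (Iic u) := by
  have h1 : ∀ s : ℝ, ENNReal.ofReal (t - s) =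
      ∫⁻ u in Iio t, (Ici s).indicator (fun _ => (1 : ℝ≥0∞)) u := by
    intro s
    rw [lintegral_indicator measurableSet_Ici, setLIntegral_one,
      Measure.restrict_apply measurableSet_Ici, Ici_inter_Iio, Real.volume_Ico]
  simp only [lput, h1]
  have hmeas : Measurable (Function.uncurry fun s u : ℝ =>
      (Ici s).indicator (fun _ => (1 : ℝ≥0∞)) u) := by
    have : (Function.uncurry fun s u : ℝ => (Ici s).indicator (fun _ => (1 : ℝ≥0∞)) u)
        = {p : ℝ × ℝ | p.1 ≤ p.2}.indicator (fun _ => (1 : ℝ≥0∞)) := by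
      ext ⟨s, u⟩
      simp [Function.uncurry, indicator]
    rw [this]
    exact measurable_const.indicator (measurableSet_le measurable_fst measurable_snd)
  rw [lintegral_lintegral_swap hmeas.aemeasurable]
  refine lintegral_congr fun u => ?_
  have : ∀ s : ℝ, (Ici s).indicator (fun _ => (1 : ℝ≥0∞)) u
      = (Iic u).indicator (fun _ => (1 : ℝ≥0∞)) s := by
    intro s; simp [indicator]
  simp only [this]
  rw [lintegral_indicator measurableSet_Iic, setLIntegral_one]

/-- The increments of a put function bracket the distribution function (lower bound). -/
lemma lput_add_mul_le (m : Measure ℝ) (t : ℝ) {h : ℝ} (hh : 0 ≤ h) :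
    lput m t + ENNReal.ofReal h * m (Iic t) ≤ lput m (t + h) := by
  rw [lput, lput, ← lintegral_indicator_const measurableSet_Iic,
    ← lintegral_add_right _ (measurable_const.indicator measurableSet_Iic)]
  refine lintegral_mono fun s => ?_
  by_cases hs : s ≤ t
  · simp only [indicator, mem_Iic, hs, if_true]
    rw [← ENNReal.ofReal_add (by linarith) hh]
    exact ENNReal.ofReal_le_ofReal (by linarith)
  · simp only [indicator, mem_Iic, hs, if_false, add_zero]
    rw [ENNReal.ofReal_of_nonpos (by linarith [not_le.1 hs])]
    exact zero_le

/-- The increments of a put function bracket the distribution function (upper bound). -/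
lemma le_lput_add_mul (m : Measure ℝ) (t h : ℝ) :
    lput m (t + h) ≤ lput m t + ENNReal.ofReal h * m (Iic (t + h)) := by
  rw [lput, lput, ← lintegral_indicator_const measurableSet_Iic,
    ← lintegral_add_right _ (measurable_const.indicator measurableSet_Iic)]
  refine lintegral_mono fun s => ?_
  by_cases hs : s ≤ t + h
  · simp only [indicator, mem_Iic, hs, if_true]
    refine le_trans (le_of_eq ?_) ENNReal.ofReal_add_le
    congr 1; ring
  · rw [ENNReal.ofReal_of_nonpos (by linarith [not_le.1 hs])]
    exact zero_le

lemma measure_Iic_le_of_lput_eq {α β : Measure ℝ} [IsFiniteMeasure α] [IsFiniteMeasure β]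
    (hfin : ∀ t, lput α t ≠ ∞) (h : ∀ t, lput α t = lput β t) (t : ℝ) :
    α (Iic t) ≤ β (Iic t) := by
  have key : ∀ n : ℕ, α (Iic t) ≤ β (Iic (t + 1 / ((n : ℝ) + 1))) := by
    intro n
    have hpos : (0 : ℝ) < 1 / ((n : ℝ) + 1) := by positivity
    have h1 := (lput_add_mul_le α t hpos.le).trans (h _).le
    have h2 := h1.trans (le_lput_add_mul β t _)
    rw [h t] at h2
    have h3 := (ENNReal.add_le_add_iff_left (by rw [← h t]; exact hfin t)).1 h2
    exact (ENNReal.mul_le_mul_iff_right (by simpa using hpos) ENNReal.ofReal_ne_top).1 h3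
  have hI : Iic t = ⋂ n : ℕ, Iic (t + 1 / ((n : ℝ) + 1)) := by
    ext s
    simp only [mem_Iic, mem_iInter]
    constructor
    · intro hs n
      have : (0 : ℝ) < 1 / ((n : ℝ) + 1) := by positivity
      linarith
    · intro hs
      refine le_of_forall_pos_lt_add fun ε hε => ?_
      obtain ⟨n, hn⟩ := exists_nat_one_div_lt hε
      linarith [hs n]
  have hlim : Tendsto (fun n : ℕ => β (Iic (t + 1 / ((n : ℝ) + 1)))) atTop (𝓝 (β (Iic t))) := by
    conv in β (Iic t) => rw [hI]
    refine tendsto_measure_iInter_atTop (fun _ => measurableSet_Iic.nullMeasurableSet) ?_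
      ⟨0, measure_ne_top _ _⟩
    intro a b hab
    refine Iic_subset_Iic.2 ?_
    have : 1 / ((b : ℝ) + 1) ≤ 1 / ((a : ℝ) + 1) := Nat.one_div_le_one_div hab
    linarith
  exact ge_of_tendsto' hlim key

/-- A finite measure is determined by its put function. -/
lemma eq_of_lput_eq {α β : Measure ℝ} [IsFiniteMeasure α] [IsFiniteMeasure β]
    (hfin : ∀ t, lput α t ≠ ∞) (h : ∀ t, lput α t = lput β t) : α = β :=
  Measure.ext_of_Iic α β fun t => le_antisymm (measure_Iic_le_of_lput_eq hfin h t)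
    (measure_Iic_le_of_lput_eq (fun t => h t ▸ hfin t) (fun t => (h t).symm) t)

/-- A nondecreasing convex function vanishing at `-∞`, of bounded slope, is the put function of a
finite measure, namely of the Stieltjes measure of its right derivative. -/
lemma exists_measure_lput_eq {c : ℝ → ℝ} (hc : ConvexOn ℝ univ c) (hmono : Monotone c)
    (hbot : Tendsto c atBot (𝓝 0)) {K : ℝ} (hK : ∀ x y, x ≤ y → c y - c x ≤ K * (y - x)) :
    ∃ m : Measure ℝ, IsFiniteMeasure m ∧ ∀ t, lput m t = ENNReal.ofReal (c t) := by
  set D : ℝ → ℝ := fun x => derivWithin c (Ioi x) x with hD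
  have hder : ∀ x, HasDerivWithinAt c (D x) (Ioi x) x := fun x =>
    hc.hasDerivWithinAt_rightDeriv_of_mem_interior (by simp)
  have hDmono : Monotone D := by
    have := hc.monotoneOn_rightDeriv
    rwa [interior_univ, monotoneOn_univ] at this
  have hslope : ∀ x y, x < y → D x * (y - x) ≤ c y - c x := by
    intro x y hxy
    have := hc.le_slope_of_hasDerivWithinAt_Ioi (mem_univ x) (mem_univ y) hxy (hder x)
    rwa [slope_def_field, le_div_iff₀ (by linarith)] at this
  have hD0 : ∀ x, 0 ≤ D x := fun x =>
    hmono.monotoneOn _ |>.derivWithin_nonneg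
  have hDK : ∀ x, D x ≤ K := by
    intro x
    have h1 := hslope x (x + 1) (by linarith)
    have h2 := hK x (x + 1) (by linarith)
    linarith
  have hc0 : ∀ x, 0 ≤ c x := fun x => hmono.le_of_tendsto hbot x
  have hDbot : Tendsto D atBot (𝓝 0) := by
    have hup : Tendsto (fun x => c (x + 1)) atBot (𝓝 0) :=
      hbot.comp (tendsto_atBot_add_const_right _ _ tendsto_id)
    refine tendsto_of_tendsto_of_tendsto_of_le_of_le tendsto_const_nhds hup hD0 fun x => ?_
    have h1 := hslope x (x + 1) (by linarith)
    have := hc0 x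
    simp only at *
    linarith
  set S := hDmono.stieltjesFunction with hS
  have hSD : ∀ x, D x ≤ S x := fun x => by
    rw [hS, hDmono.stieltjesFunction_eq]; exact hDmono.le_rightLim le_rfl
  have hSD' : ∀ x, S x ≤ D (x + 1) := fun x => by
    rw [hS, hDmono.stieltjesFunction_eq]; exact hDmono.rightLim_le (by linarith)
  have hSbot : Tendsto S atBot (𝓝 0) := by
    have hup : Tendsto (fun x => D (x + 1)) atBot (𝓝 0) :=
      hDbot.comp (tendsto_atBot_add_const_right _ _ tendsto_id)
    exact tendsto_of_tendsto_of_tendsto_of_le_of_le hDbot hup hSD hSD'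
  have hfin : IsFiniteMeasure S.measure := by
    refine S.isFiniteMeasure_of_forall_abs_le (C := K) fun x => ?_
    rw [abs_of_nonneg ((hD0 x).trans (hSD x))]
    exact (hSD' x).trans (hDK _)
  refine ⟨S.measure, hfin, fun t => ?_⟩
  rw [lput_eq_lintegral_Iic]
  -- The right limit defining `S` changes `D` only at its countably many discontinuities.
  have hae : ∀ᵐ u : ℝ, S u = D u := by
    have : {u | ¬ S u = D u}.Countable := by
      refine hDmono.countable_not_continuousAt.mono ?_
      intro u hu
      simp only [mem_ofPred_eq] at hu ⊢
      intro hcont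
      apply hu
      rw [hS, hDmono.stieltjesFunction_eq]
      refine le_antisymm ?_ (hDmono.le_rightLim le_rfl)
      rw [← hDmono.continuousAt_iff_leftLim_eq_rightLim.1 hcont]
      exact hDmono.leftLim_le le_rfl
    exact this.ae_notMem volume |>.mono fun u hu => by simpa using hu
  have h1 : ∫⁻ u in Iio t, S.measure (Iic u) = ∫⁻ u in Iio t, ENNReal.ofReal (D u) := by
    refine lintegral_congr_ae (ae_restrict_of_ae ?_)
    filter_upwards [hae] with u hu
    rw [S.measure_Iic hSbot, hu, sub_zero]
  rw [h1]
  have hcont : Continuous c := by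
    have := hc.continuousOn_interior
    rwa [interior_univ, continuousOn_univ] at this
  have hintg : ∀ a b, IntervalIntegrable D volume a b := fun a b => hDmono.intervalIntegrable
  have h2 : ∀ n : ℕ, ∫⁻ u in Ioc (t - n) t, ENNReal.ofReal (D u)
      = ENNReal.ofReal (c t - c (t - n)) := by
    intro n
    have hle : t - n ≤ t := by
      have : (0 : ℝ) ≤ n := n.cast_nonneg
      linarith
    rw [← ofReal_integral_eq_lintegral_ofReal ((hintg _ _).1) (ae_of_all _ hD0),
      ← intervalIntegral.integral_of_le hle,
      intervalIntegral.integral_eq_sub_of_hasDeriv_right_of_le hle hcont.continuousOn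
        (fun x _ => hder x) (hintg _ _)]
  have hU : Iic t = ⋃ n : ℕ, Ioc (t - n) t := by
    ext s
    simp only [mem_Iic, mem_iUnion, mem_Ioc]
    constructor
    · intro hs
      obtain ⟨n, hn⟩ := exists_nat_gt (t - s)
      exact ⟨n, by linarith, hs⟩
    · rintro ⟨n, -, h⟩
      exact h
  have hmonoI : Monotone fun n : ℕ => Ioc (t - n) t := by
    intro a b hab
    have : (a : ℝ) ≤ b := by exact_mod_cast hab
    exact Ioc_subset_Ioc_left (by linarith)
  rw [setLIntegral_congr (Iio_ae_eq_Iic), hU]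
  have hL : Tendsto (fun n : ℕ => ∫⁻ u in Ioc (t - n) t, ENNReal.ofReal (D u)) atTop
      (𝓝 (∫⁻ u in ⋃ n : ℕ, Ioc (t - n) t, ENNReal.ofReal (D u))) := by
    simp only [← withDensity_apply _ (measurableSet_Ioc),
      ← withDensity_apply _ (MeasurableSet.iUnion fun n : ℕ => measurableSet_Ioc)]
    exact tendsto_measure_iUnion_atTop hmonoI
  have hR : Tendsto (fun n : ℕ => ∫⁻ u in Ioc (t - n) t, ENNReal.ofReal (D u)) atTop
      (𝓝 (ENNReal.ofReal (c t))) := by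
    simp only [h2]
    refine (ENNReal.continuous_ofReal.tendsto _).comp ?_
    have : Tendsto (fun n : ℕ => t - (n : ℝ)) atTop atBot :=
      tendsto_atBot_add_const_left _ _ (tendsto_neg_atTop_atBot.comp tendsto_natCast_atTop_atTop)
    simpa using (tendsto_const_nhds (x := c t)).sub (hbot.comp this)
  exact tendsto_nhds_unique hL hR

lemma FiniteFirstMoment.mono {α β : Measure ℝ} (hβ : FiniteFirstMoment β) (h : α ≤ β) :
    FiniteFirstMoment α :=
  ⟨⟨(h univ).trans_lt (by have := hβ.1; exact measure_lt_top β univ)⟩, hβ.2.mono_measure h⟩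

lemma FiniteFirstMoment.integrable_put {m : Measure ℝ} (hm : FiniteFirstMoment m) (t : ℝ) :
    Integrable (fun s => max (t - s) 0) m := by
  have := hm.1
  exact ((integrable_const t).sub hm.2).pos_part

lemma FiniteFirstMoment.integrable_of_linearGrowth {m : Measure ℝ} (hm : FiniteFirstMoment m)
    {φ : ℝ → ℝ} (hφ : Measurable φ) (h : LinearGrowth φ) : Integrable φ m := by
  have := hm.1
  obtain ⟨C, hC⟩ := h
  refine (((integrable_const (1 : ℝ)).add hm.2.abs).const_mul C).mono'
    hφ.aestronglyMeasurable (ae_of_all _ fun x => ?_)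
  simpa using hC x

lemma put_nonneg (m : Measure ℝ) (t : ℝ) : 0 ≤ put m t :=
  integral_nonneg fun _ => le_max_right _ _

lemma FiniteFirstMoment.ofReal_put {m : Measure ℝ} (hm : FiniteFirstMoment m) (t : ℝ) :
    ENNReal.ofReal (put m t) = lput m t := by
  rw [put, ofReal_integral_eq_lintegral_ofReal (hm.integrable_put t)
    (ae_of_all _ fun _ => le_max_right _ _)]
  refine lintegral_congr fun s => ?_
  rcases le_total (t - s) 0 with h | h
  · rw [max_eq_right h, ENNReal.ofReal_of_nonpos h, ENNReal.ofReal_zero]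
  · rw [max_eq_left h]

lemma put_add {α β : Measure ℝ} (hα : FiniteFirstMoment α) (hβ : FiniteFirstMoment β) (t : ℝ) :
    put (α + β) t = put α t + put β t :=
  integral_add_measure (hα.integrable_put t) (hβ.integrable_put t)

lemma put_mono {α β : Measure ℝ} (hβ : FiniteFirstMoment β) (h : α ≤ β) (t : ℝ) :
    put α t ≤ put β t :=
  integral_mono_measure h (ae_of_all _ fun _ => le_max_right _ _) (hβ.integrable_put t)

lemma FiniteFirstMoment.convexOn_put {m : Measure ℝ} (hm : FiniteFirstMoment m) :
    ConvexOn ℝ univ (put m) := by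
  refine ⟨convex_univ, ?_⟩
  intro x _ y _ a b ha hb hab
  simp only [put, smul_eq_mul]
  rw [← integral_const_mul, ← integral_const_mul, ← integral_add
    ((hm.integrable_put x).const_mul a) ((hm.integrable_put y).const_mul b)]
  refine integral_mono (hm.integrable_put _)
    (((hm.integrable_put x).const_mul a).add ((hm.integrable_put y).const_mul b)) fun s => ?_
  have h1 := mul_le_mul_of_nonneg_left (le_max_left (x - s) 0) ha
  have h2 := mul_le_mul_of_nonneg_left (le_max_left (y - s) 0) hb
  have h3 := mul_nonneg ha (le_max_right (x - s) 0)
  have h4 := mul_nonneg hb (le_max_right (y - s) 0)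
  have hs : s = (a + b) * s := by rw [hab, one_mul]
  exact max_le (by simp only; linarith) (by simp only; linarith)

lemma FiniteFirstMoment.tendsto_put {m : Measure ℝ} (hm : FiniteFirstMoment m) :
    Tendsto (put m) atBot (𝓝 0) := by
  have : Tendsto (put m) atBot (𝓝 (∫ _, (0 : ℝ) ∂m)) := by
    refine tendsto_integral_filter_of_dominated_convergence (fun s => |s|) ?_ ?_ hm.2.abs ?_
    · exact Eventually.of_forall fun t => (hm.integrable_put t).aestronglyMeasurable
    · filter_upwards [eventually_le_atBot (0 : ℝ)] with t ht
      refine ae_of_all _ fun s => ?_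
      rw [Real.norm_eq_abs, abs_of_nonneg (le_max_right _ _)]
      exact max_le (by linarith [neg_abs_le s]) (abs_nonneg s)
    · refine ae_of_all _ fun s => ?_
      refine tendsto_const_nhds.congr' ?_
      filter_upwards [eventually_le_atBot s] with t ht
      rw [max_eq_right (by linarith)]
  simpa using this

lemma FiniteFirstMoment.put_le {m : Measure ℝ} (hm : FiniteFirstMoment m) {t : ℝ} (ht : 0 ≤ t) :
    put m t ≤ m.real univ * t + ∫ s, |s| ∂m := by
  have := hm.1
  have h : ∫ s, (t + |s|) ∂m = m.real univ * t + ∫ s, |s| ∂m := by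
    rw [integral_add (integrable_const t) hm.2.abs, integral_const, smul_eq_mul]
  rw [← h]
  refine integral_mono (hm.integrable_put t) ((integrable_const t).add hm.2.abs) fun s => ?_
  exact max_le (by simp only; linarith [neg_abs_le s]) (by simp only; positivity)

lemma FiniteFirstMoment.le_put {m : Measure ℝ} (hm : FiniteFirstMoment m) (t : ℝ) :
    m.real univ * t - ∫ s, |s| ∂m ≤ put m t := by
  have := hm.1
  have h : ∫ s, (t - |s|) ∂m = m.real univ * t - ∫ s, |s| ∂m := by
    rw [integral_sub (integrable_const t) hm.2.abs, integral_const, smul_eq_mul]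
  rw [← h]
  refine integral_mono ((integrable_const t).sub hm.2.abs) (hm.integrable_put t) fun s => ?_
  exact le_max_of_le_left (by simp only; linarith [le_abs_self s])

lemma FiniteFirstMoment.put_sub_le {m : Measure ℝ} (hm : FiniteFirstMoment m) {x y : ℝ}
    (hxy : x ≤ y) : put m y - put m x ≤ m.real univ * (y - x) := by
  have := hm.1
  have h : ∫ _, (y - x) ∂m = m.real univ * (y - x) := by
    rw [integral_const, smul_eq_mul]
  rw [← h, put, put, ← integral_sub (hm.integrable_put y) (hm.integrable_put x)]
  refine integral_mono ((hm.integrable_put y).sub (hm.integrable_put x)) (integrable_const _)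
    fun s => ?_
  simp only
  have h1 := le_max_left (x - s) 0
  have h2 := le_max_right (x - s) 0
  have : max (y - s) 0 ≤ max (x - s) 0 + (y - x) := max_le (by linarith) (by linarith)
  linarith

lemma ConvexOn.monotone_of_tendsto_atBot {c : ℝ → ℝ} (hc : ConvexOn ℝ univ c)
    (hbot : Tendsto c atBot (𝓝 0)) : Monotone c := by
  intro x y hxy
  by_contra hlt
  push Not at hlt
  have hxy' : x < y := lt_of_le_of_ne hxy (by rintro rfl; exact lt_irrefl _ hlt)
  -- the chord over `[x, y]` has negative slope, and `c` lies above it to the left of `x`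
  have hlow : ∀ z, z < x → c x + (c x - c y) / (y - x) * (x - z) ≤ c z := by
    intro z hz
    have := hc.slope_mono_adjacent (mem_univ z) (mem_univ y) hz hxy'
    rw [div_le_iff₀ (by linarith)] at this
    have e : (c x - c y) / (y - x) * (x - z) = - ((c y - c x) / (y - x) * (x - z)) := by ring
    linarith
  have hinf : Tendsto (fun z => c x + (c x - c y) / (y - x) * (x - z)) atBot atTop := by
    refine tendsto_atTop_add_const_left _ _ (Tendsto.const_mul_atTop ?_ ?_)
    · exact div_pos (by linarith) (by linarith)
    · exact tendsto_atTop_add_const_left _ _ (tendsto_neg_atBot_atTop)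
  have : Tendsto c atBot atTop := tendsto_atTop_mono' _
    ((eventually_lt_atBot x).mono hlow) hinf
  exact not_tendsto_nhds_of_tendsto_atTop this 0 hbot

/-- A splitting of the put function of `ν` into two nonnegative convex functions comes from a
splitting of `ν` into two measures. -/
lemma exists_measure_split {ν : Measure ℝ} (hν : FiniteFirstMoment ν) {c₁ c₂ : ℝ → ℝ}
    (h₁ : ConvexOn ℝ univ c₁) (h₂ : ConvexOn ℝ univ c₂) (p₁ : ∀ t, 0 ≤ c₁ t) (p₂ : ∀ t, 0 ≤ c₂ t)
    (hs : ∀ t, c₁ t + c₂ t = put ν t) :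
    ∃ m₁ m₂ : Measure ℝ, m₁ + m₂ = ν ∧ (∀ t, put m₁ t = c₁ t) ∧ (∀ t, put m₂ t = c₂ t) := by
  have t₁ : Tendsto c₁ atBot (𝓝 0) := tendsto_of_tendsto_of_tendsto_of_le_of_le
    tendsto_const_nhds hν.tendsto_put p₁ fun t => by linarith [hs t, p₂ t]
  have t₂ : Tendsto c₂ atBot (𝓝 0) := tendsto_of_tendsto_of_tendsto_of_le_of_le
    tendsto_const_nhds hν.tendsto_put p₂ fun t => by linarith [hs t, p₁ t]
  have mo₁ := h₁.monotone_of_tendsto_atBot t₁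
  have mo₂ := h₂.monotone_of_tendsto_atBot t₂
  obtain ⟨m₁, f₁, e₁⟩ := exists_measure_lput_eq h₁ mo₁ t₁ (K := ν.real univ) fun x y hxy => by
    linarith [hs x, hs y, mo₂ hxy, hν.put_sub_le hxy]
  obtain ⟨m₂, f₂, e₂⟩ := exists_measure_lput_eq h₂ mo₂ t₂ (K := ν.real univ) fun x y hxy => by
    linarith [hs x, hs y, mo₁ hxy, hν.put_sub_le hxy]
  have hνfin := hν.1
  have hsum : m₁ + m₂ = ν := by
    refine eq_of_lput_eq (fun t => ?_) fun t => ?_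
    · rw [lput_add, e₁, e₂]
      exact ENNReal.add_ne_top.2 ⟨ENNReal.ofReal_ne_top, ENNReal.ofReal_ne_top⟩
    · rw [lput_add, e₁, e₂, ← ENNReal.ofReal_add (p₁ t) (p₂ t), hs, hν.ofReal_put]
  have F₁ : FiniteFirstMoment m₁ := hν.mono (hsum ▸ Measure.le_add_right le_rfl)
  have F₂ : FiniteFirstMoment m₂ := hν.mono (hsum ▸ Measure.le_add_left le_rfl)
  refine ⟨m₁, m₂, hsum, fun t => ?_, fun t => ?_⟩
  · exact (ENNReal.ofReal_eq_ofReal_iff (put_nonneg _ _) (p₁ t)).1 (by rw [F₁.ofReal_put, e₁])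
  · exact (ENNReal.ofReal_eq_ofReal_iff (put_nonneg _ _) (p₂ t)).1 (by rw [F₂.ofReal_put, e₂])

lemma CDOrder.measure_univ {α β : Measure ℝ} (h : CDOrder α β) : α.real univ = β.real univ := by
  have h1 := h (fun _ => 1) (convexOn_const _ convex_univ) antitone_const
    ⟨1, fun x => by simp⟩
  have h2 := h (fun _ => -1) (convexOn_const _ convex_univ) antitone_const
    ⟨1, fun x => by simp⟩
  simp only [integral_const, smul_eq_mul, mul_one, mul_neg] at h1 h2
  linarith

lemma convexOn_put_payoff (t : ℝ) : ConvexOn ℝ univ (fun s : ℝ => max (t - s) 0) := by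
  have h1 : ConvexOn ℝ univ (fun s : ℝ => t - s) := by
    refine ⟨convex_univ, ?_⟩
    intro x _ y _ a b _ _ hab
    simp only [smul_eq_mul]
    have : t = (a + b) * t := by rw [hab, one_mul]
    linarith
  exact h1.sup (convexOn_const 0 convex_univ)

lemma antitone_put_payoff (t : ℝ) : Antitone (fun s : ℝ => max (t - s) 0) :=
  fun x y hxy => max_le_max (by linarith) le_rfl

lemma linearGrowth_put_payoff (t : ℝ) : LinearGrowth (fun s : ℝ => max (t - s) 0) := by
  refine ⟨|t| + 1, fun s => ?_⟩
  rw [abs_of_nonneg (le_max_right _ _)]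
  have h1 := abs_nonneg t
  have h2 := abs_nonneg s
  have h3 := le_abs_self t
  have h4 := neg_abs_le s
  exact max_le (by nlinarith) (by positivity)

lemma CDOrder.put_le {α β : Measure ℝ} (h : CDOrder α β) (t : ℝ) : put α t ≤ put β t :=
  h _ (convexOn_put_payoff t) (antitone_put_payoff t) (linearGrowth_put_payoff t)

/-- The slopes of a convex function of linear growth are bounded below. -/
lemma exists_slope_bound {φ : ℝ → ℝ} (hc : ConvexOn ℝ univ φ) (hl : LinearGrowth φ) :
    ∃ K : ℝ, ∀ x y, x ≤ y → φ x - φ y ≤ K * (y - x) := by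
  obtain ⟨C, hC⟩ := hl
  refine ⟨C, fun x y hxy => ?_⟩
  rcases hxy.eq_or_lt with rfl | hxy
  · simp
  by_contra hlt
  push Not at hlt
  -- otherwise `φ` grows at `-∞` with a slope `k > C`
  set k := (φ x - φ y) / (y - x) with hk
  have hkC : C < k := by rw [hk, lt_div_iff₀ (by linarith)]; exact hlt
  have hlow : ∀ z, z < x → φ x + k * (x - z) ≤ φ z := by
    intro z hz
    have := hc.slope_mono_adjacent (mem_univ z) (mem_univ y) hz hxy
    rw [div_le_iff₀ (by linarith)] at this
    have e : k * (x - z) = - ((φ y - φ x) / (y - x) * (x - z)) := by rw [hk]; ring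
    linarith
  -- a point so far to the left that the growth bound is violated
  set z := min (min x 0) (-((C - φ x - k * x) / (k - C))) - 1 with hz
  have z1 : z < x := by
    have := (min_le_left (min x 0) (-((C - φ x - k * x) / (k - C)))).trans (min_le_left _ _); linarith
  have z2 : z < 0 := by
    have := (min_le_left (min x 0) (-((C - φ x - k * x) / (k - C)))).trans (min_le_right _ _); linarith
  have z3 : z < -((C - φ x - k * x) / (k - C)) := by
    have := min_le_right (min x 0) (-((C - φ x - k * x) / (k - C))); linarith
  have h1 := hlow z z1
  have h2 := (le_abs_self _).trans (hC z)
  rw [abs_of_neg z2] at h2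
  have h3 : (k - C) * z < - (C - φ x - k * x) := by
    have := mul_lt_mul_of_pos_left z3 (sub_pos.2 hkC)
    rwa [mul_neg, mul_div_cancel₀ _ (by linarith)] at this
  nlinarith

/-- The convex-decreasing order is tested by mass and put functions: a test function truncated
from below at `φ k` is, up to the constant `φ k`, a mixture `∫ (-x - s)⁺ dm(s)` of put payoffs. -/
lemma cdOrder_of_put_le {α β : Measure ℝ} (hα : FiniteFirstMoment α) (hβ : FiniteFirstMoment β)
    (hmass : α.real univ = β.real univ) (hput : ∀ t, put α t ≤ put β t) : CDOrder α β := by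
  intro φ hφ hanti hlin
  have := hα.1
  have := hβ.1
  have hmeas : Measurable φ := hanti.measurable
  have iα : Integrable φ α := hα.integrable_of_linearGrowth hmeas hlin
  have iβ : Integrable φ β := hβ.integrable_of_linearGrowth hmeas hlin
  obtain ⟨K, hK⟩ := exists_slope_bound hφ hlin
  have iiα : ∀ k, Integrable (fun x => max (φ x) (φ k)) α := fun k =>
    iα.sup (integrable_const (φ k))
  have iiβ : ∀ k, Integrable (fun x => max (φ x) (φ k)) β := fun k =>
    iβ.sup (integrable_const (φ k))
  have step : ∀ k, ∫ x, max (φ x) (φ k) ∂α ≤ ∫ x, max (φ x) (φ k) ∂β := by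
    intro k
    set c : ℝ → ℝ := fun t => max (φ (-t)) (φ k) - φ k with hcdef
    have hc : ConvexOn ℝ univ c := by
      have h1 : ConvexOn ℝ univ (fun t : ℝ => φ (-t)) := by
        refine ⟨convex_univ, ?_⟩
        intro x _ y _ a b ha hb hab
        have := hφ.2 (mem_univ (-x)) (mem_univ (-y)) ha hb hab
        simp only [smul_eq_mul] at this ⊢
        rwa [show -(a * x + b * y) = a * -x + b * -y by ring]
      have h2 := (h1.sup (convexOn_const (φ k) convex_univ)).add_const (-φ k)
      refine h2.congr fun t _ => ?_
      simp [hcdef, sub_eq_add_neg]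
    have hmono : Monotone c := by
      intro x y hxy
      have := max_le_max (hanti (neg_le_neg hxy)) (le_refl (φ k))
      simp only [hcdef]
      linarith
    have hbot : Tendsto c atBot (𝓝 0) := by
      refine tendsto_const_nhds.congr' ?_
      filter_upwards [eventually_le_atBot (-k)] with t ht
      have : φ (-t) ≤ φ k := hanti (by linarith)
      simp [hcdef, this]
    have hslope : ∀ x y, x ≤ y → c y - c x ≤ K * (y - x) := by
      intro x y hxy
      have h1 := hK (-y) (-x) (by linarith)
      have h2 : 0 ≤ K * (y - x) := by
        have := hanti (show -y ≤ -x by linarith)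
        linarith
      have : max (φ (-y)) (φ k) ≤ max (φ (-x)) (φ k) + K * (y - x) :=
        max_le (by linarith [le_max_left (φ (-x)) (φ k)]) (by linarith [le_max_right (φ (-x)) (φ k)])
      simp only [hcdef]
      linarith
    obtain ⟨m, hm, hmc⟩ := exists_measure_lput_eq hc hmono hbot hslope
    have swap : ∀ γ : Measure ℝ, IsFiniteMeasure γ →
        ∫⁻ x, ENNReal.ofReal (max (φ x) (φ k) - φ k) ∂γ = ∫⁻ s, lput γ (-s) ∂m := by
      intro γ _
      have h1 : ∀ x, ENNReal.ofReal (max (φ x) (φ k) - φ k)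
          = ∫⁻ s, ENNReal.ofReal (-x - s) ∂m := by
        intro x
        have := hmc (-x)
        simp only [hcdef, neg_neg, lput] at this
        exact this.symm
      simp only [h1, lput]
      rw [lintegral_lintegral_swap (by fun_prop)]
      refine lintegral_congr fun s => lintegral_congr fun x => ?_
      congr 1
      ring
    have hle : ∫⁻ x, ENNReal.ofReal (max (φ x) (φ k) - φ k) ∂α
        ≤ ∫⁻ x, ENNReal.ofReal (max (φ x) (φ k) - φ k) ∂β := by
      rw [swap α inferInstance, swap β inferInstance]
      refine lintegral_mono fun s => ?_
      rw [← hα.ofReal_put, ← hβ.ofReal_put]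
      exact ENNReal.ofReal_le_ofReal (hput _)
    have hnn : ∀ x, 0 ≤ max (φ x) (φ k) - φ k := fun x => by linarith [le_max_right (φ x) (φ k)]
    have jα : Integrable (fun x => max (φ x) (φ k) - φ k) α := (iiα k).sub (integrable_const _)
    have jβ : Integrable (fun x => max (φ x) (φ k) - φ k) β := (iiβ k).sub (integrable_const _)
    rw [← ofReal_integral_eq_lintegral_ofReal jα (ae_of_all _ hnn),
      ← ofReal_integral_eq_lintegral_ofReal jβ (ae_of_all _ hnn),
      ENNReal.ofReal_le_ofReal_iff (integral_nonneg hnn :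
        (0 : ℝ) ≤ ∫ x, (max (φ x) (φ k) - φ k) ∂β),
      integral_sub (iiα k) (integrable_const _), integral_sub (iiβ k) (integrable_const _),
      integral_const, integral_const, hmass] at hle
    linarith
  have lim : ∀ γ : Measure ℝ, IsFiniteMeasure γ → Integrable φ γ →
      Tendsto (fun n : ℕ => ∫ x, max (φ x) (φ n) ∂γ) atTop (𝓝 (∫ x, φ x ∂γ)) := by
    intro γ _ hi
    refine tendsto_integral_of_dominated_convergence (fun x => |φ x| + |φ 0|)
      (fun n => (hi.sup (integrable_const (φ n))).aestronglyMeasurable)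
      (hi.abs.add (integrable_const _)) (fun n => ae_of_all _ fun x => ?_) (ae_of_all _ fun x => ?_)
    · have h0 : φ n ≤ φ 0 := hanti n.cast_nonneg
      rw [Real.norm_eq_abs, abs_le]
      have := le_abs_self (φ x)
      have := neg_abs_le (φ x)
      have := le_abs_self (φ 0)
      have := abs_nonneg (φ 0)
      have := abs_nonneg (φ x)
      exact ⟨by linarith [le_max_left (φ x) (φ n)], max_le (by linarith) (by linarith)⟩
    · refine tendsto_const_nhds.congr' ?_
      obtain ⟨N, hN⟩ := exists_nat_ge x
      filter_upwards [eventually_ge_atTop N] with n hn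
      have : φ n ≤ φ x := hanti (hN.trans (by exact_mod_cast hn))
      rw [max_eq_left this]
  exact le_of_tendsto_of_tendsto' (lim α inferInstance iα) (lim β inferInstance iβ)
    fun n => step n

/-! ### Shadows -/

lemma eq_of_put_eq {α β : Measure ℝ} (hα : FiniteFirstMoment α) (hβ : FiniteFirstMoment β)
    (h : ∀ t, put α t = put β t) : α = β := by
  have := hα.1
  have := hβ.1
  exact eq_of_lput_eq (fun t => by rw [← hα.ofReal_put]; exact ENNReal.ofReal_ne_top)
    fun t => by rw [← hα.ofReal_put, ← hβ.ofReal_put, h]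

lemma measure_add_right_cancel {α β γ : Measure ℝ} [IsFiniteMeasure γ] (h : α + γ = β + γ) :
    α = β := by
  ext s _
  have := congrArg (fun m : Measure ℝ => m s) h
  simp only [Measure.add_apply] at this
  exact (ENNReal.add_left_inj (measure_ne_top γ s)).1 this

/-- `θ + ρ = ν` is the splitting of `ν` in which `ρ` has as put function the convex hull of
`p_ν - p_η`; the part `θ` is then the shadow of `η` in `ν`. -/
def IsShadowSplit (η ν θ ρ : Measure ℝ) : Prop :=
  θ + ρ = ν ∧ IsHull (fun t => put ν t - put η t) (put ρ)

lemma exists_isShadowSplit {η ν : Measure ℝ} (hη : FiniteFirstMoment η)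
    (hν : FiniteFirstMoment ν) (hput : ∀ t, put η t ≤ put ν t) :
    ∃ θ ρ, IsShadowSplit η ν θ ρ := by
  have h0 : ∀ t, (fun _ : ℝ => (0 : ℝ)) t ≤ put ν t - put η t := fun t => sub_nonneg.2 (hput t)
  have hz : ConvexOn ℝ univ (fun _ : ℝ => (0 : ℝ)) := convexOn_const 0 convex_univ
  obtain ⟨c, hc⟩ := exists_isHull _ _ hz h0
  have hq := hc.convexOn_sub hν.convexOn_put hη.convexOn_put
  obtain ⟨θ, ρ, hsum, -, hρ⟩ := exists_measure_split hν hq hc.1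
    (fun t => by linarith [hc.2.1 t, put_nonneg η t]) (fun t => hc.2.2 _ hz h0 t)
    (fun t => by ring)
  exact ⟨θ, ρ, hsum, by rwa [show put ρ = c from funext hρ]⟩

/-- Comparison of asymptotic slopes gives `θ` the mass of `η`, so that both orders in the
definition of the shadow reduce to put functions. Minimality of `θ` is maximality of the hull:
`p_(ν - θ')` is another convex minorant of `p_ν - p_η`. -/
lemma IsShadowSplit.isShadow {η ν θ ρ : Measure ℝ} (h : IsShadowSplit η ν θ ρ)
    (hη : FiniteFirstMoment η) (hν : FiniteFirstMoment ν) (hput : ∀ t, put η t ≤ put ν t)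
    (hmass : η.real univ ≤ ν.real univ) : IsShadow η ν θ := by
  obtain ⟨hsum, hhull⟩ := h
  have hθν : θ ≤ ν := hsum ▸ Measure.le_add_right le_rfl
  have hρν : ρ ≤ ν := hsum ▸ Measure.le_add_left le_rfl
  have Fθ := hν.mono hθν
  have Fρ := hν.mono hρν
  have hpsum : ∀ t, put ν t = put θ t + put ρ t := fun t => by rw [← hsum, put_add Fθ Fρ]
  have := Fθ.1
  have := Fρ.1
  have hmsum : ν.real univ = θ.real univ + ρ.real univ := by
    rw [← hsum, measureReal_add_apply]
  -- comparison of the asymptotic slopes at `+∞`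
  have hslope : ∀ {a b C : ℝ}, (∀ t, 0 ≤ t → a * t ≤ b * t + C) → a ≤ b := by
    intro a b C H
    by_contra hlt
    push Not at hlt
    have h1 := H ((|C| + 1) / (a - b)) (div_nonneg (by positivity) (by linarith))
    have h2 : (a - b) * ((|C| + 1) / (a - b)) = |C| + 1 := mul_div_cancel₀ _ (by linarith)
    have := le_abs_self C
    nlinarith
  set M := ν.real univ - η.real univ with hM
  have hρmass : ρ.real univ = M := by
    apply le_antisymm
    · refine hslope (C := ∫ s, |s| ∂ρ + ∫ s, |s| ∂ν + ∫ s, |s| ∂η) fun t ht => ?_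
      have h1 := Fρ.le_put t
      have h2 := hhull.2.1 t
      have h3 := hν.put_le ht
      have h4 := hη.le_put t
      simp only [hM, sub_mul] at *
      linarith
    · set C := ∫ s, |s| ∂ν + ∫ s, |s| ∂η with hC
      have hCnn : 0 ≤ C := add_nonneg (integral_nonneg fun _ => abs_nonneg _)
        (integral_nonneg fun _ => abs_nonneg _)
      refine hslope (C := C + ∫ s, |s| ∂ρ) fun t ht => ?_
      -- The line of slope `M` through `-C` is a convex minorant, which needs `M ≥ 0` on the left.
      have hline : ConvexOn ℝ univ (fun t : ℝ => M * t - C) := by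
        refine ⟨convex_univ, ?_⟩
        intro x _ y _ a b _ _ hab
        simp only [smul_eq_mul]
        have : C = (a + b) * C := by rw [hab, one_mul]
        linarith
      have h1 := hhull.2.2 _ hline (fun s => ?_) t
      · have h2 := Fρ.put_le ht
        linarith
      · rcases le_total 0 s with hs | hs
        · have h3 := hν.le_put s
          have h4 := hη.put_le hs
          simp only [hM, sub_mul, hC]
          linarith
        · have : M * s ≤ 0 := mul_nonpos_of_nonneg_of_nonpos (by linarith) hs
          have := hput s
          simp only
          linarith
  refine ⟨Fθ, cdOrder_of_put_le hη Fθ (by linarith) fun t => ?_, hθν, ?_⟩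
  · have := hhull.2.1 t
    linarith [hpsum t]
  · intro θ' Fθ' hcd hle
    refine cdOrder_of_put_le Fθ Fθ' (by linarith [hcd.measure_univ]) fun t => ?_
    have := Fθ'.1
    have hsub : θ' + (ν - θ') = ν := by rw [add_comm]; exact Measure.sub_add_cancel_of_le hle
    have Fs : FiniteFirstMoment (ν - θ') := hν.mono Measure.sub_le
    have hp : ∀ t, put ν t = put θ' t + put (ν - θ') t := fun t => by
      conv_lhs => rw [← hsub]
      exact put_add Fθ' Fs t
    have := hhull.2.2 _ Fs.convexOn_put (fun s => by linarith [hp s, hcd.put_le s]) t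
    linarith [hp t, hpsum t]

/-- Additivity of shadows: enlarging `η₁` by `η₂` enlarges the shadow by a measure `κ` that
dominates `η₂` in the convex-decreasing order. -/
lemma IsShadowSplit.exists_increment {η₁ η₂ η ν θ₁ ρ₁ θ ρ : Measure ℝ}
    (h₁ : IsShadowSplit η₁ ν θ₁ ρ₁) (h : IsShadowSplit η ν θ ρ) (hadd : η = η₁ + η₂)
    (F₁ : FiniteFirstMoment η₁) (F₂ : FiniteFirstMoment η₂) (hν : FiniteFirstMoment ν)
    (m₁ : θ₁.real univ = η₁.real univ) (m : θ.real univ = η.real univ) :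
    ∃ κ, θ = θ₁ + κ ∧ CDOrder η₂ κ := by
  have Fρ₁ : FiniteFirstMoment ρ₁ := hν.mono (h₁.1 ▸ Measure.le_add_left le_rfl)
  have Fρ : FiniteFirstMoment ρ := hν.mono (h.1 ▸ Measure.le_add_left le_rfl)
  have hh : IsHull (fun t => put ρ₁ t - put η₂ t) (put ρ) := by
    refine h₁.2.of_sub F₂.convexOn_put ?_
    convert h.2 using 2 with t
    rw [hadd, put_add F₁ F₂]
    ring
  have hconv := hh.convexOn_sub Fρ₁.convexOn_put F₂.convexOn_put
  obtain ⟨ρ', κ, hsum, hρ', hκ⟩ := exists_measure_split Fρ₁ hh.1 hconv (put_nonneg ρ)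
    (fun t => by linarith [hh.2.1 t, put_nonneg η₂ t]) (fun t => by ring)
  have Fρ' : FiniteFirstMoment ρ' := Fρ₁.mono (hsum ▸ Measure.le_add_right le_rfl)
  have Fκ : FiniteFirstMoment κ := Fρ₁.mono (hsum ▸ Measure.le_add_left le_rfl)
  obtain rfl : ρ' = ρ := eq_of_put_eq Fρ' Fρ hρ'
  have hθ : θ = θ₁ + κ := by
    have := Fρ.1
    refine measure_add_right_cancel (γ := ρ') ?_
    rw [h.1, add_assoc, add_comm κ, hsum, h₁.1]
  refine ⟨κ, hθ, cdOrder_of_put_le F₂ Fκ ?_ fun t => ?_⟩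
  · have := F₁.1
    have := F₂.1
    have := Fκ.1
    have : IsFiniteMeasure θ₁ := (hν.mono (h₁.1 ▸ Measure.le_add_right le_rfl) : FiniteFirstMoment θ₁).1
    rw [hθ, hadd, measureReal_add_apply, measureReal_add_apply] at m
    linarith
  · rw [hκ]
    linarith [hh.2.1 t]

/-! ### From a decreasing family of measures to a measure on the plane -/

/-- A lower bound whose integral is not exceeded by the infimum of the integrals is, almost
everywhere, the infimum. No monotonicity of the family is needed. -/
lemma ae_iInf_eq {ι : Type*} [Countable ι] {ν : Measure ℝ} {f : ι → ℝ → ℝ≥0∞} {g : ℝ → ℝ≥0∞}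
    (hf : ∀ i, Measurable (f i)) (hg : ∫⁻ t, g t ∂ν ≠ ∞)
    (hgf : ∀ i, g ≤ᵐ[ν] f i) (hintg : ⨅ i, ∫⁻ t, f i t ∂ν ≤ ∫⁻ t, g t ∂ν) :
    ∀ᵐ t ∂ν, ⨅ i, f i t = g t := by
  have h1 : g ≤ᵐ[ν] fun t => ⨅ i, f i t := by
    filter_upwards [ae_all_iff.2 hgf] with t ht using le_iInf ht
  have h2 := ae_eq_of_ae_le_of_lintegral_le h1 hg (Measurable.iInf hf).aemeasurable
    ((le_iInf fun i => lintegral_mono fun t => iInf_le _ i).trans hintg)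
  filter_upwards [h2] with t ht using ht.symm

lemma ae_iSup_eq {ι : Type*} [Countable ι] {ν : Measure ℝ} {f : ι → ℝ → ℝ≥0∞} {g : ℝ → ℝ≥0∞}
    (hfin : ∫⁻ t, g t ∂ν ≠ ∞) (hg : Measurable g)
    (hgf : ∀ i, f i ≤ᵐ[ν] g) (hintg : ∫⁻ t, g t ∂ν ≤ ⨆ i, ∫⁻ t, f i t ∂ν) :
    ∀ᵐ t ∂ν, ⨆ i, f i t = g t := by
  have h1 : (fun t => ⨆ i, f i t) ≤ᵐ[ν] g := by
    filter_upwards [ae_all_iff.2 hgf] with t ht using iSup_le ht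
  refine ae_eq_of_ae_le_of_lintegral_le h1 ?_ hg.aemeasurable
    (hintg.trans (iSup_le fun i => lintegral_mono fun t => le_iSup (fun i => f i t) i))
  exact ((lintegral_mono_ae h1).trans_lt hfin.lt_top).ne

lemma iInf_measure_Ici_eq {μ : Measure ℝ} [IsFiniteMeasure μ] (x : ℝ) :
    ⨅ q : {q : ℚ // (q : ℝ) < x}, μ (Ici (q : ℝ)) = μ (Ici x) := by
  have : Nonempty {q : ℚ // (q : ℝ) < x} := let ⟨q, hq⟩ := exists_rat_lt x; ⟨⟨q, hq⟩⟩
  have hset : ⋂ q : {q : ℚ // (q : ℝ) < x}, Ici (q : ℝ) = Ici x := by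
    ext y
    simp only [mem_iInter, mem_Ici, Subtype.forall]
    refine ⟨fun h => le_of_forall_rat_lt_imp_le h, fun h q hq => hq.le.trans h⟩
  rw [← hset]
  refine (Directed.measure_iInter (fun q => measurableSet_Ici.nullMeasurableSet) ?_
    ⟨Classical.arbitrary _, measure_ne_top _ _⟩).symm
  intro a b
  rcases le_total a b with hab | hab
  · exact ⟨b, Ici_subset_Ici.2 (by exact_mod_cast hab), le_rfl⟩
  · exact ⟨a, le_rfl, Ici_subset_Ici.2 (by exact_mod_cast hab)⟩

/-- A decreasing family `θ x ≤ ν` with the masses `μ [x, ∞)` is of the form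
`θ x A = P ([x, ∞) × A)` for a measure `P` with second marginal `ν`. The densities
`q ↦ dθ(-q)/dν (t)`, `q ∈ ℚ`, are for `ν`-a.e. `t` a distribution function on the rationals,
hence define a kernel `κ t`, the conditional law of `-s` given `t`. -/
lemma exists_measure_prod_Ici {μ ν : Measure ℝ} [IsFiniteMeasure μ] [IsFiniteMeasure ν]
    {θ : ℝ → Measure ℝ} (hθν : ∀ x, θ x ≤ ν) (hanti : ∀ x y, x ≤ y → θ y ≤ θ x)
    (hmass : ∀ x, θ x univ = μ (Ici x)) (huniv : μ univ = ν univ) :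
    ∃ P : Measure (ℝ × ℝ), IsFiniteMeasure P ∧ P.map Prod.snd = ν ∧
      ∀ x A, MeasurableSet A → P (Ici x ×ˢ A) = θ x A := by
  have hfin : ∀ x, IsFiniteMeasure (θ x) := fun x => isFiniteMeasure_of_le ν (hθν x)
  let g : ℚ → ℝ → ℝ≥0∞ := fun q => (θ (-(q : ℝ))).rnDeriv ν
  have hgm : ∀ q, Measurable (g q) := fun q => Measure.measurable_rnDeriv _ _
  have hgθ : ∀ q, ν.withDensity (g q) = θ (-(q : ℝ)) := fun q =>
    Measure.withDensity_rnDeriv_eq _ _ (Measure.absolutelyContinuous_of_le (hθν _))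
  have hgset : ∀ q A, MeasurableSet A → ∫⁻ t in A, g q t ∂ν = θ (-(q : ℝ)) A := fun q A hA => by
    rw [← hgθ, withDensity_apply _ hA]
  have hgint : ∀ q, ∫⁻ t, g q t ∂ν = μ (Ici (-(q : ℝ))) := fun q => by
    rw [← hmass, ← hgset q _ MeasurableSet.univ, Measure.restrict_univ]
  have hmono : ∀ q r, q ≤ r → g q ≤ᵐ[ν] g r := fun q r hqr =>
    ae_le_of_forall_setLIntegral_le_of_sigmaFinite (hgm q) fun A hA _ => by
      rw [hgset _ _ hA, hgset _ _ hA]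
      exact hanti _ _ (neg_le_neg (by exact_mod_cast hqr)) A
  have hle1 : ∀ q, g q ≤ᵐ[ν] fun _ => 1 := fun q =>
    ae_le_of_forall_setLIntegral_le_of_sigmaFinite (hgm q) fun A hA _ => by
      rw [hgset _ _ hA]
      simpa using hθν _ A
  have hνint : ∫⁻ _, 1 ∂ν = μ univ := by simp [huniv]
  -- Each property of a distribution function follows by comparing integrals, i.e. from the
  -- continuity of `μ` along the corresponding monotone family of half-lines.
  have hright : ∀ q : ℚ, ∀ᵐ t ∂ν, ⨅ r : Ioi q, g r t = g q t := fun q => by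
    refine ae_iInf_eq (fun r => hgm r) (by rw [hgint]; exact measure_ne_top _ _)
      (fun r => hmono _ _ (mem_Ioi.1 r.2).le) ?_
    simp only [hgint]
    rw [← iInf_measure_Ici_eq (μ := μ) (-(q : ℝ))]
    refine le_iInf fun s => ?_
    have hs : q < -s.1 := by
      have := s.2
      rw [lt_neg] at this
      exact_mod_cast this
    refine (iInf_le _ (⟨-s.1, hs⟩ : Ioi q)).trans_eq ?_
    simp
  have hbot : ∀ᵐ t ∂ν, ⨅ q, g q t = 0 := by
    refine ae_iInf_eq (g := fun _ => 0) hgm (by simp) (fun q => ae_of_all _ fun t => zero_le) ?_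
    simp only [hgint, lintegral_zero]
    have h0 : ⋂ n : ℕ, Ici (n : ℝ) = ∅ := by
      ext y
      simp only [mem_iInter, mem_Ici, mem_empty_iff_false, iff_false, not_forall, not_le]
      exact exists_nat_gt y
    have hd := Antitone.measure_iInter (μ := μ) (s := fun n : ℕ => Ici (n : ℝ))
      (fun a b hab => Ici_subset_Ici.2 (by exact_mod_cast hab))
      (fun n => measurableSet_Ici.nullMeasurableSet) ⟨0, measure_ne_top _ _⟩
    rw [h0, measure_empty] at hd
    rw [hd]
    refine le_iInf fun n => (iInf_le _ (-(n : ℚ))).trans_eq ?_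
    simp
  have htop : ∀ᵐ t ∂ν, ⨆ q, g q t = 1 := by
    refine ae_iSup_eq (g := fun _ => 1) (by rw [hνint]; exact measure_ne_top _ _)
      measurable_const hle1 ?_
    rw [hνint]
    simp only [hgint]
    have h0 : ⋃ n : ℕ, Ici (-(n : ℝ)) = univ := by
      ext y
      simp only [mem_iUnion, mem_Ici, mem_univ, iff_true]
      obtain ⟨n, hn⟩ := exists_nat_ge (-y)
      exact ⟨n, by linarith⟩
    have hd := Monotone.measure_iUnion (μ := μ) (s := fun n : ℕ => Ici (-(n : ℝ)))
      (fun a b hab => Ici_subset_Ici.2 (neg_le_neg (by exact_mod_cast hab)))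
    rw [h0] at hd
    rw [hd]
    refine iSup_le fun n => le_trans (le_of_eq ?_) (le_iSup _ (n : ℚ))
    simp
  let G : ℝ → ℚ → ℝ := fun t q => (g q t).toReal
  have hG : Measurable G := measurable_pi_lambda _ fun q => (hgm q).ennreal_toReal
  have hpt : ∀ᵐ t ∂ν, ProbabilityTheory.IsRatStieltjesPoint G t := by
    filter_upwards [ae_all_iff.2 hright, hbot, htop,
      ae_all_iff.2 fun q => ae_all_iff.2 fun r => ae_all_iff.2 fun h => hmono q r h,
      ae_all_iff.2 hle1] with t h1 h2 h3 h4 h5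
    have hne : ∀ q, g q t ≠ ∞ := fun q => ne_top_of_le_ne_top ENNReal.one_ne_top (h5 q)
    have hm : Monotone fun q => g q t := fun q r hqr => h4 q r hqr
    refine ⟨fun q r hqr => ENNReal.toReal_mono (hne r) (hm hqr), ?_, ?_, fun q => ?_⟩
    · have := tendsto_atTop_iSup hm
      rw [h3] at this
      exact ENNReal.toReal_one ▸ (ENNReal.tendsto_toReal ENNReal.one_ne_top).comp this
    · have := tendsto_atBot_iInf hm
      rw [h2] at this
      exact ENNReal.toReal_zero ▸ (ENNReal.tendsto_toReal ENNReal.zero_ne_top).comp this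
    · change ⨅ r : Ioi q, (g r t).toReal = (g q t).toReal
      rw [← h1 q, ENNReal.toReal_iInf fun r => hne _]
  let κ : ProbabilityTheory.Kernel ℝ ℝ :=
    ⟨fun t => (ProbabilityTheory.stieltjesOfMeasurableRat G hG t).measure,
      ProbabilityTheory.measurable_measure_stieltjesOfMeasurableRat hG⟩
  have hκ : ProbabilityTheory.IsMarkovKernel κ :=
    ⟨fun t => inferInstanceAs
      (IsProbabilityMeasure (ProbabilityTheory.stieltjesOfMeasurableRat G hG t).measure)⟩
  have hκq : ∀ q : ℚ, ∀ᵐ t ∂ν, κ t (Iic (q : ℝ)) = g q t := fun q => by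
    filter_upwards [hpt, hle1 q] with t ht h5
    change (ProbabilityTheory.stieltjesOfMeasurableRat G hG t).measure (Iic (q : ℝ)) = _
    rw [ProbabilityTheory.measure_stieltjesOfMeasurableRat_Iic,
      ProbabilityTheory.stieltjesOfMeasurableRat_eq,
      ProbabilityTheory.toRatCDF_of_isRatStieltjesPoint ht]
    exact ENNReal.ofReal_toReal (ne_top_of_le_ne_top ENNReal.one_ne_top h5)
  have hsw : Measurable fun p : ℝ × ℝ => (-p.2, p.1) := by fun_prop
  let P : Measure (ℝ × ℝ) := (ν.compProd κ).map fun p => (-p.2, p.1)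
  have hPfin : IsFiniteMeasure P := inferInstance
  have hPq : ∀ (q : ℚ) A, MeasurableSet A → P (Ici (q : ℝ) ×ˢ A) = θ q A := fun q A hA => by
    have hpre : (fun p : ℝ × ℝ => (-p.2, p.1)) ⁻¹' (Ici (q : ℝ) ×ˢ A)
        = A ×ˢ Iic (((-q : ℚ)) : ℝ) := by
      ext p
      simp only [mem_preimage, mem_prod, mem_Ici, mem_Iic, Rat.cast_neg, le_neg, and_comm]
    change Measure.map _ _ _ = _
    rw [Measure.map_apply hsw (measurableSet_Ici.prod hA), hpre,
      Measure.compProd_apply_prod hA measurableSet_Iic]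
    have := hgset (-q) A hA
    rw [Rat.cast_neg, neg_neg] at this
    rw [← this]
    exact lintegral_congr_ae (ae_restrict_of_ae (hκq (-q)))
  refine ⟨P, hPfin, ?_, fun x A hA => ?_⟩
  · change Measure.map _ (Measure.map _ _) = _
    rw [Measure.map_map measurable_snd hsw]
    exact Measure.fst_compProd ν κ
  -- For real `x`, `θ x A ≤ P ([x, ∞) × A)` by approximation from the left along the rationals,
  -- and both measures have total mass `μ [x, ∞)`.
  have hPapp : ∀ y B, MeasurableSet B →
      (P.restrict (Ici y ×ˢ univ)).map Prod.snd B = P (Ici y ×ˢ B) := fun y B hB => by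
    rw [Measure.map_apply measurable_snd hB, Measure.restrict_apply (measurable_snd hB)]
    congr 1
    ext p
    simp [and_comm]
  have hinf : ∀ B, MeasurableSet B →
      P (Ici x ×ˢ B) = ⨅ q : {q : ℚ // (q : ℝ) < x}, θ q B := fun B hB => by
    have hB' : MeasurableSet (Prod.snd ⁻¹' B : Set (ℝ × ℝ)) := measurable_snd hB
    have hm : ∀ y, (P.restrict (Prod.snd ⁻¹' B)).map Prod.fst (Ici y) = P (Ici y ×ˢ B) :=
      fun y => by
        rw [Measure.map_apply measurable_fst measurableSet_Ici,
          Measure.restrict_apply (measurable_fst measurableSet_Ici)]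
        rfl
    rw [← hm, ← iInf_measure_Ici_eq]
    exact iInf_congr fun q => by rw [hm, hPq q.1 B hB]
  have hle : θ x ≤ (P.restrict (Ici x ×ˢ univ)).map Prod.snd := by
    refine Measure.le_iff.2 fun B hB => ?_
    rw [hPapp x B hB, hinf B hB]
    exact le_iInf fun q => hanti _ _ q.2.le B
  have heq := Measure.eq_of_le_of_measure_univ_eq hle (by
    rw [hPapp x _ MeasurableSet.univ, hinf _ MeasurableSet.univ]
    simp only [hmass]
    exact (iInf_measure_Ici_eq x).symm)
  rw [heq, hPapp x A hA]

/-! ### Supermartingale property and uniqueness -/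

/-- The difference `β - α` is recovered as the Stieltjes measure of the difference of the
distribution functions, which is nondecreasing by hypothesis. -/
lemma measure_le_of_Ioc_le {α β : Measure ℝ} [IsFiniteMeasure α] [IsFiniteMeasure β]
    (h : ∀ x y, x < y → α (Ioc x y) ≤ β (Ioc x y)) : α ≤ β := by
  have hsub : ∀ (γ : Measure ℝ) [IsFiniteMeasure γ] (x y : ℝ), x ≤ y →
      γ.real (Iic y) - γ.real (Iic x) = γ.real (Ioc x y) := fun γ _ x y hxy => by
    rw [← Iic_union_Ioc_eq_Iic hxy,
      measureReal_union (Iic_disjoint_Ioc le_rfl) measurableSet_Ioc]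
    ring
  have hcont : ∀ (γ : Measure ℝ) [IsFiniteMeasure γ] (x : ℝ),
      ContinuousWithinAt (fun y => γ.real (Iic y)) (Ici x) x := fun γ _ x => by
    rw [← continuousWithinAt_Ioi_iff_Ici]
    have := tendsto_measure_biInter_gt (μ := γ) (s := fun y : ℝ => Iic y) (a := x)
      (fun r _ => measurableSet_Iic.nullMeasurableSet) (fun i j _ hij => Iic_subset_Iic.2 hij)
      ⟨x + 1, by simp, measure_ne_top _ _⟩
    have hset : ⋂ r > x, Iic r = Iic x := by
      ext z
      simp only [mem_iInter, mem_Iic]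
      exact ⟨fun hz => le_of_forall_gt_imp_ge_of_dense hz, fun hz r hr => hz.trans hr.le⟩
    rw [hset] at this
    exact (ENNReal.tendsto_toReal (measure_ne_top _ _)).comp this
  let g : StieltjesFunction ℝ :=
    { toFun := fun x => β.real (Iic x) - α.real (Iic x)
      mono' := fun x y hxy => by
        rcases hxy.eq_or_lt with rfl | hlt
        · exact le_rfl
        have h1 := hsub α x y hxy
        have h2 := hsub β x y hxy
        have h3 : α.real (Ioc x y) ≤ β.real (Ioc x y) :=
          ENNReal.toReal_mono (measure_ne_top _ _) (h x y hlt)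
        dsimp only
        linarith
      right_continuous' := fun x => (hcont β x).sub (hcont α x) }
  have hg : β = g.measure + α := by
    refine Measure.ext_of_Ioc _ _ fun x y hxy => ?_
    have h1 := hsub α x y hxy.le
    have h2 := hsub β x y hxy.le
    have h3 : α.real (Ioc x y) ≤ β.real (Ioc x y) :=
      ENNReal.toReal_mono (measure_ne_top _ _) (h x y hxy)
    have h4 : g y - g x = β.real (Ioc x y) - α.real (Ioc x y) := by
      change (β.real (Iic y) - α.real (Iic y)) - (β.real (Iic x) - α.real (Iic x)) = _
      linarith
    rw [Measure.add_apply, StieltjesFunction.measure_Ioc, h4, ← ofReal_measureReal (μ := α),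
      ← ENNReal.ofReal_add (sub_nonneg.2 h3) measureReal_nonneg, sub_add_cancel,
      ofReal_measureReal]
  rw [hg]
  exact Measure.le_add_left le_rfl

lemma setIntegral_nonneg_of_Ico {P : Measure (ℝ × ℝ)} {f : ℝ × ℝ → ℝ} (hf : Integrable f P)
    (hpos : ∀ x y, x < y → 0 ≤ ∫ p in Ico x y ×ˢ univ, f p ∂P) {A : Set ℝ}
    (hA : MeasurableSet A) : 0 ≤ ∫ p in A ×ˢ univ, f p ∂P := by
  have hn : Measurable fun p : ℝ × ℝ => -p.1 := by fun_prop
  -- The reflection `-p.1` turns the intervals `[x, y)` into the `(x, y]` of Stieltjes measures.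
  let γ : (ℝ × ℝ → ℝ) → Measure ℝ := fun g =>
    (P.withDensity fun p => ENNReal.ofReal (g p)).map fun p => -p.1
  have hγ : ∀ g B, MeasurableSet B →
      γ g (-B) = ∫⁻ p in B ×ˢ univ, ENNReal.ofReal (g p) ∂P := fun g B hB => by
    change Measure.map _ _ _ = _
    rw [Measure.map_apply hn hB.neg, withDensity_apply _ (hn hB.neg)]
    congr 2
    ext p
    simp
  have hγfin : ∀ g, Integrable g P → IsFiniteMeasure (γ g) := fun g hg => by
    have := isFiniteMeasure_withDensity_ofReal hg.2
    change IsFiniteMeasure (Measure.map _ _)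
    infer_instance
  have key : ∀ B, MeasurableSet B →
      ∫ p in B ×ˢ univ, f p ∂P = (γ f (-B)).toReal - (γ (-f) (-B)).toReal := fun B hB => by
    rw [hγ _ _ hB, hγ _ _ hB, integral_eq_lintegral_pos_part_sub_lintegral_neg_part hf.restrict]
    rfl
  have h1 := hγfin f hf
  have h2 := hγfin (-f) hf.neg
  have hle : γ (-f) ≤ γ f := by
    refine measure_le_of_Ioc_le fun x y hxy => ?_
    have := hpos (-y) (-x) (by linarith)
    rw [key _ measurableSet_Ico, neg_Ico, neg_neg, neg_neg, sub_nonneg] at this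
    exact (ENNReal.toReal_le_toReal (measure_ne_top _ _) (measure_ne_top _ _)).1 this
  rw [key A hA, sub_nonneg]
  exact ENNReal.toReal_mono (measure_ne_top _ _) (hle _)

lemma eq_of_Ici_prod {P Q : Measure (ℝ × ℝ)} [IsFiniteMeasure P] [IsFiniteMeasure Q]
    (h : ∀ x A, MeasurableSet A → Q (Ici x ×ˢ A) = P (Ici x ×ˢ A)) : Q = P := by
  have hm : ∀ (R : Measure (ℝ × ℝ)) (A B : Set ℝ), MeasurableSet B →
      (R.restrict (univ ×ˢ A)).map Prod.fst B = R (B ×ˢ A) := fun R A B hB => by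
    rw [Measure.map_apply measurable_fst hB, Measure.restrict_apply (measurable_fst hB)]
    congr 1
    ext p
    simp
  refine Measure.ext_prod fun {B A} hB hA => ?_
  rw [← hm Q A B hB, ← hm P A B hB]
  congr 1
  exact Measure.ext_of_Ici _ _ fun x => by
    rw [hm _ _ _ measurableSet_Ici, hm _ _ _ measurableSet_Ici, h x A hA]

lemma PCDOrder.restrict_of_cdOrder {μ ν : Measure ℝ} (hμ : FiniteFirstMoment μ) (h : CDOrder μ ν)
    (S : Set ℝ) : PCDOrder (μ.restrict S) ν := fun φ hc ha hp hl =>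
  (setIntegral_le_integral (hμ.integrable_of_linearGrowth ha.measurable hl)
    (ae_of_all _ hp)).trans (h φ hc ha hl)

/-- The image of `μ|[x, y)` under `P` is the increment of `θ`, so its barycentre inequality is the
convex-decreasing order tested on `s ↦ -s`. -/
lemma supermartingaleProperty_of_increments {P : Measure (ℝ × ℝ)} [IsFiniteMeasure P]
    {μ ν : Measure ℝ} {θ : ℝ → Measure ℝ} (hμ : FiniteFirstMoment μ) (hν : FiniteFirstMoment ν)
    (hfst : P.map Prod.fst = μ) (hsnd : P.map Prod.snd = ν)
    (hP : ∀ x A, MeasurableSet A → P (Ici x ×ˢ A) = θ x A)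
    (hinc : ∀ x y, x ≤ y → ∃ κ, θ x = θ y + κ ∧ CDOrder (μ.restrict (Ico x y)) κ) :
    SupermartingaleProperty P := by
  have i1 : Integrable (fun p : ℝ × ℝ => p.1) P :=
    (hfst ▸ hμ.2 : Integrable (fun x : ℝ => x) (P.map Prod.fst)).comp_measurable measurable_fst
  have i2 : Integrable (fun p : ℝ × ℝ => p.2) P :=
    (hsnd ▸ hν.2 : Integrable (fun x : ℝ => x) (P.map Prod.snd)).comp_measurable measurable_snd
  have hIco : ∀ x y, x < y → 0 ≤ ∫ p in Ico x y ×ˢ univ, (p.1 - p.2) ∂P := fun x y hxy => by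
    obtain ⟨κ, hκ, hcd⟩ := hinc x y hxy.le
    have hκP : (P.restrict (Ico x y ×ˢ univ)).map Prod.snd = κ := by
      ext A hA
      have hset : Ici x ×ˢ A = Ici y ×ˢ A ∪ Ico x y ×ˢ A := by
        rw [← union_prod, union_comm, Ico_union_Ici_eq_Ici hxy.le]
      have hdis : Disjoint (Ici y ×ˢ A) (Ico x y ×ˢ A) :=
        Set.disjoint_left.2 fun p hp hp' => not_lt.2 hp.1 hp'.1.2
      have h1 := hP x A hA
      rw [hset, measure_union hdis (measurableSet_Ico.prod hA), hP y A hA, hκ,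
        Measure.add_apply] at h1
      have hfin : θ y A ≠ ∞ := hP y A hA ▸ measure_ne_top _ _
      rw [← (ENNReal.add_right_inj hfin).1 h1, Measure.map_apply measurable_snd hA,
        Measure.restrict_apply (measurable_snd hA)]
      congr 1
      ext p
      simp [and_comm]
    have e1 : ∫ p in Ico x y ×ˢ univ, p.1 ∂P = ∫ s in Ico x y, s ∂μ := by
      rw [← hfst, setIntegral_map measurableSet_Ico (by fun_prop) measurable_fst.aemeasurable]
      congr 2
      ext p
      simp
    have e2 : ∫ p in Ico x y ×ˢ univ, p.2 ∂P = ∫ t, t ∂κ := by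
      rw [← hκP, integral_map measurable_snd.aemeasurable (by fun_prop)]
    have hle := hcd (fun s => -s) (concaveOn_id convex_univ).neg (fun a b hab => neg_le_neg hab)
      ⟨1, fun s => by rw [abs_neg]; linarith⟩
    rw [integral_neg, integral_neg] at hle
    rw [integral_sub i1.restrict i2.restrict, e1, e2]
    linarith
  intro A hA
  have := setIntegral_nonneg_of_Ico (i1.sub i2) hIco hA
  simp only [Pi.sub_apply] at this
  rw [integral_sub i1.restrict i2.restrict] at this
  linarith

/-- Decreasing Supermartingale Transport, Theorem 5.8(ii).
Given `μ ≤_cd ν`, every `μ|_{[x,∞)}` is `≤_pcd ν`; there is a unique measure `P` on `ℝ²`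
with first marginal `μ` transporting `μ|_{[x,∞)}` to its shadow in `ν` for every `x`,
and this `P` is a supermartingale coupling of `μ` and `ν`. -/
theorem decreasing_supermartingale_transport
    (μ ν : Measure ℝ) (hμ : FiniteFirstMoment μ) (hν : FiniteFirstMoment ν)
    (h : CDOrder μ ν) :
    (∀ x : ℝ, PCDOrder (μ.restrict (Set.Ici x)) ν) ∧
    ∃ θ : ℝ → Measure ℝ,
      (∀ x : ℝ, IsShadow (μ.restrict (Set.Ici x)) ν (θ x)) ∧
      ∃ P : Measure (ℝ × ℝ),
        (IsFiniteMeasure P ∧ P.map Prod.fst = μ ∧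
          ∀ x : ℝ, ∀ A : Set ℝ, MeasurableSet A → P (Set.Ici x ×ˢ A) = θ x A) ∧
        IsSupermartingaleCoupling P μ ν ∧
        ∀ Q : Measure (ℝ × ℝ),
          (IsFiniteMeasure Q ∧ Q.map Prod.fst = μ ∧
            ∀ x : ℝ, ∀ A : Set ℝ, MeasurableSet A → Q (Set.Ici x ×ˢ A) = θ x A) →
          Q = P := by
  have hfμ := hμ.1
  have hfν := hν.1
  refine ⟨fun x => PCDOrder.restrict_of_cdOrder hμ h _, ?_⟩
  have hF : ∀ S : Set ℝ, FiniteFirstMoment (μ.restrict S) := fun S =>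
    hμ.mono Measure.restrict_le_self
  have hput : ∀ (x t : ℝ), put (μ.restrict (Ici x)) t ≤ put ν t := fun x t =>
    (put_mono hμ Measure.restrict_le_self t).trans (h.put_le t)
  choose θ ρ hsplit using fun x : ℝ => exists_isShadowSplit (hF (Ici x)) hν (hput x)
  have hshadow : ∀ x, IsShadow (μ.restrict (Ici x)) ν (θ x) := fun x =>
    (hsplit x).isShadow (hF _) hν (hput x) (by
      rw [← h.measure_univ, measureReal_restrict_apply_univ]
      exact measureReal_mono (subset_univ _))
  have hreal : ∀ x, (θ x).real univ = (μ.restrict (Ici x)).real univ := fun x =>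
    (hshadow x).2.1.measure_univ.symm
  have hmass : ∀ x, θ x univ = μ (Ici x) := fun x => by
    have := (hshadow x).1.1
    rw [← ofReal_measureReal, hreal, measureReal_restrict_apply_univ, ofReal_measureReal]
  have hinc : ∀ x y, x ≤ y → ∃ κ, θ x = θ y + κ ∧ CDOrder (μ.restrict (Ico x y)) κ :=
    fun x y hxy => by
    have hd : Disjoint (Ici y) (Ico x y) := Set.disjoint_left.2 fun z hz hz' => not_lt.2 hz hz'.2
    exact (hsplit y).exists_increment (hsplit x) (by
      rw [← Ico_union_Ici_eq_Ici hxy, union_comm, Measure.restrict_union hd measurableSet_Ico])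
      (hF _) (hF _) hν (hreal y) (hreal x)
  obtain ⟨P, hPfin, hsnd, hP⟩ := exists_measure_prod_Ici (μ := μ) (fun x => (hshadow x).2.2.1)
    (fun x y hxy => by
      obtain ⟨κ, hκ, -⟩ := hinc x y hxy
      exact hκ ▸ Measure.le_add_right le_rfl) hmass
    (by rw [← ofReal_measureReal, h.measure_univ, ofReal_measureReal])
  have hfst : P.map Prod.fst = μ := Measure.ext_of_Ici _ _ fun x => by
    rw [Measure.map_apply measurable_fst measurableSet_Ici, ← hmass, ← hP x _ MeasurableSet.univ,
      prod_univ]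
  refine ⟨θ, hshadow, P, ⟨hPfin, hfst, hP⟩,
    ⟨⟨hfst, hsnd⟩, supermartingaleProperty_of_increments hμ hν hfst hsnd hP hinc⟩, ?_⟩
  rintro Q ⟨hQfin, -, hQ⟩
  exact eq_of_Ici_prod fun x A hA => by rw [hQ x A hA, hP x A hA]
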